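/- arXiv:2202.11137 — 6 statements merged into one kernel-verified Lean document; each statement's English description precedes it below -/
import Mathlib

section
/- Let C_0 > 1. For all x, y ∈ [0,∞)^n and s ∈ (−1,1)^n with q_−(x,y,s) > C_0²/(1 + |x| + |y|)², one has |x|² + |y|² > C_0/8. Moreover, if in addition Σ_{i=1}^n x_i y_i s_i ≥ 0, then q_+(x,y,s)·q_−(x,y,s) > C_0²/32. -/
/-- On the global region `G₁` (i.e. when `q₋(x,y,s) > C₀²/(1+|x|+|y|)²`, `C₀ > 1`),
one has `|x|² + |y|² > C₀/8`; moreover, if in addition `Σᵢ xᵢyᵢsᵢ ≥ 0`, then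
`q₊(x,y,s)·q₋(x,y,s) > C₀²/32`. Here
`q±(x,y,s) = Σᵢ (xᵢ² + yᵢ² ± 2xᵢyᵢsᵢ)` and `|·|` is the Euclidean norm. -/
theorem global_region_lower_bounds (n : ℕ) (C0 : ℝ) (hC0 : 1 < C0)
    (x y s : Fin n → ℝ)
    (hx : ∀ i, 0 ≤ x i) (hy : ∀ i, 0 ≤ y i)
    (hs : ∀ i, s i ∈ Set.Ioo (-1 : ℝ) 1)
    (hglob : C0 ^ 2 / (1 + Real.sqrt (∑ i, x i ^ 2) + Real.sqrt (∑ i, y i ^ 2)) ^ 2 <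
      ∑ i, (x i ^ 2 + y i ^ 2 - 2 * x i * y i * s i)) :
    C0 / 8 < (∑ i, x i ^ 2) + ∑ i, y i ^ 2 ∧
    (0 ≤ ∑ i, x i * y i * s i →
      C0 ^ 2 / 32 <
        (∑ i, (x i ^ 2 + y i ^ 2 + 2 * x i * y i * s i)) *
          (∑ i, (x i ^ 2 + y i ^ 2 - 2 * x i * y i * s i))) := by
  have hcs := Real.sum_mul_le_sqrt_mul_sqrt Finset.univ x y
  have hP : -(∑ i, x i * y i) ≤ ∑ i, x i * y i * s i := by
    rw [← Finset.sum_neg_distrib]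
    apply Finset.sum_le_sum
    intro i _
    have h1 := mul_nonneg (hx i) (hy i)
    have h2 := (hs i).1
    nlinarith
  have hm : ∑ i, (x i ^ 2 + y i ^ 2 - 2 * x i * y i * s i)
      = (∑ i, x i ^ 2) + (∑ i, y i ^ 2) - 2 * ∑ i, x i * y i * s i := by
    rw [Finset.mul_sum, ← Finset.sum_add_distrib, ← Finset.sum_sub_distrib]
    exact Finset.sum_congr rfl fun i _ => by ring
  have hp : ∑ i, (x i ^ 2 + y i ^ 2 + 2 * x i * y i * s i)
      = (∑ i, x i ^ 2) + (∑ i, y i ^ 2) + 2 * ∑ i, x i * y i * s i := by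
    rw [Finset.mul_sum, ← Finset.sum_add_distrib, ← Finset.sum_add_distrib]
    exact Finset.sum_congr rfl fun i _ => by ring
  rw [hm] at hglob
  rw [hm, hp]
  have hA : 0 ≤ ∑ i, x i ^ 2 := Finset.sum_nonneg fun i _ => sq_nonneg _
  have hB : 0 ≤ ∑ i, y i ^ 2 := Finset.sum_nonneg fun i _ => sq_nonneg _
  have ha := Real.sq_sqrt hA
  have hb := Real.sq_sqrt hB
  have ha0 := Real.sqrt_nonneg (∑ i, x i ^ 2)
  have hb0 := Real.sqrt_nonneg (∑ i, y i ^ 2)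
  generalize Real.sqrt (∑ i, x i ^ 2) = a at *
  generalize Real.sqrt (∑ i, y i ^ 2) = b at *
  generalize (∑ i, x i * y i * s i) = P at *
  rw [← ha, ← hb] at hglob ⊢
  have hPab : -(a * b) ≤ P := by linarith
  have hd : 0 < (1 + a + b) ^ 2 := by positivity
  rw [div_lt_iff₀ hd] at hglob
  have ht : C0 < (a + b) * (1 + a + b) := by
    apply lt_of_pow_lt_pow_left₀ 2 (by positivity)
    have h1 : a ^ 2 + b ^ 2 - 2 * P ≤ (a + b) ^ 2 := by nlinarith
    calc C0 ^ 2 < _ := hglob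
      _ ≤ (a + b) ^ 2 * (1 + a + b) ^ 2 := by gcongr
      _ = _ := by ring
  have hR : (a + b) ^ 2 / 2 ≤ a ^ 2 + b ^ 2 := by nlinarith [sq_nonneg (a - b)]
  have ht0 : 1 / 3 ≤ a + b := by
    by_contra! h
    nlinarith
  refine ⟨?_, fun hP0 => ?_⟩
  · by_contra! h
    have h1 : (a + b) ^ 2 ≤ C0 / 4 := by linarith
    have h2 : a + b ≤ C0 / 2 := by
      apply le_of_pow_le_pow_left₀ (two_ne_zero) (by linarith)
      nlinarith
    nlinarith
  · have hq : 0 < a ^ 2 + b ^ 2 - 2 * P := by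
      by_contra! h
      nlinarith
    have h3 : (1 + a + b) ^ 2 ≤ 32 * (a ^ 2 + b ^ 2 + 2 * P) := by
      have : (1 + a + b) ^ 2 ≤ (4 * (a + b)) ^ 2 := by
        apply pow_le_pow_left₀ (by positivity)
        linarith
      nlinarith
    nlinarith [mul_le_mul_of_nonneg_left h3 hq.le]
end

section
/- Let γ > 0 and let a, b ∈ ℝ with a ≥ γ and b ≤ 0. Define v(t) = t^{−γ} · exp(−(a − b√(1−t))/t) for t ∈ (0,1). Then v is monotone nondecreasing on (0,1), and consequently sup_{t ∈ (0,1)} v(t) ≤ e^{−a}. -/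
theorem v_aux (γ a b : ℝ) (hγ : 0 < γ) (ha : γ ≤ a) (hb : b ≤ 0) (s t : ℝ) (hs : 0 < s)
    (hst : s ≤ t) (ht1 : t ≤ 1) :
    s ^ (-γ) * Real.exp (-(a - b * Real.sqrt (1 - s)) / s) ≤
      t ^ (-γ) * Real.exp (-(a - b * Real.sqrt (1 - t)) / t) := by
  have ht : 0 < t := hs.trans_le hst
  rw [Real.rpow_def_of_pos hs, Real.rpow_def_of_pos ht, ← Real.exp_add, ← Real.exp_add,
    Real.exp_le_exp]
  have h1 : Real.log t - Real.log s ≤ t / s - 1 := by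
    rw [← Real.log_div ht.ne' hs.ne']
    exact Real.log_le_sub_one_of_pos (div_pos ht hs)
  have h2 : Real.sqrt (1 - t) / t ≤ Real.sqrt (1 - s) / s := by
    have : Real.sqrt (1 - t) ≤ Real.sqrt (1 - s) := Real.sqrt_le_sqrt (by linarith)
    gcongr
  have h3 : t / s - 1 ≤ 1 / s - 1 / t := by
    have e : 1 / s - 1 / t - (t / s - 1) = (t - s) * (1 - t) / (s * t) := by
      field_simp
    have : 0 ≤ (t - s) * (1 - t) / (s * t) :=
      div_nonneg (mul_nonneg (by linarith) (by linarith)) (by positivity)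
    linarith
  have h4 : 0 ≤ 1 / s - 1 / t := by
    have := one_div_le_one_div_of_le hs hst
    linarith
  have h5 : γ * (Real.log t - Real.log s) ≤ a * (1 / s - 1 / t) :=
    (mul_le_mul_of_nonneg_left (h1.trans h3) hγ.le).trans (mul_le_mul_of_nonneg_right ha h4)
  have h6 := mul_le_mul_of_nonpos_left h2 hb
  have e : ∀ x : ℝ, -(a - b * Real.sqrt (1 - x)) / x
      = -(a * (1 / x)) + b * (Real.sqrt (1 - x) / x) := by
    intro x
    ring
  rw [e, e]
  linarith

/-- Let `γ > 0`, `a ≥ γ` and `b ≤ 0`. Then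
`v(t) = t^(−γ) · exp(−(a − b·√(1−t))/t)` is monotone nondecreasing on `(0,1)`;
consequently `sup_{t ∈ (0,1)} v(t) ≤ e^{−a}`. -/
theorem v_monotone_of_b_nonpos (γ a b : ℝ) (hγ : 0 < γ) (ha : γ ≤ a) (hb : b ≤ 0) :
    MonotoneOn (fun t : ℝ => t ^ (-γ) * Real.exp (-(a - b * Real.sqrt (1 - t)) / t))
      (Set.Ioo (0 : ℝ) 1) ∧
    ∀ t ∈ Set.Ioo (0 : ℝ) 1,
      t ^ (-γ) * Real.exp (-(a - b * Real.sqrt (1 - t)) / t) ≤ Real.exp (-a) := by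
  refine ⟨fun s hs t ht hst => v_aux γ a b hγ ha hb s t hs.1 hst ht.2.le, fun t ht => ?_⟩
  have h := v_aux γ a b hγ ha hb t 1 ht.1 ht.2.le le_rfl
  simpa using h
end

section
/- Let n ≥ 1 and λ ≥ n be real (λ = n + α̂ with α̂ ≥ 0 in the paper). For every C_0 > 8λ there exists C > 0 such that for all x, y ∈ [0,∞)^n and s ∈ (−1,1)^n with q_−(x,y,s) > C_0²/(1 + |x| + |y|)², one has sup_{t ∈ (0,1)} t^{−λ} · exp(−q_−(√(1−t)·x, y, s)/t) ≤ C·H_{λ,0}(x,y,s), where √(1−t)·x = (√(1−t)x_1,…,√(1−t)x_n), so that q_−(√(1−t)x,y,s) = (1−t)|x|² + |y|² − 2√(1−t) Σ_{i=1}^n x_i y_i s_i. -/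
/-- `q₊(x,y,s) = Σᵢ (xᵢ² + yᵢ² + 2xᵢyᵢsᵢ)`. -/
noncomputable def qPlus (n : ℕ) (x y s : Fin n → ℝ) : ℝ :=
  ∑ i, (x i ^ 2 + y i ^ 2 + 2 * x i * y i * s i)

/-- `q₋(x,y,s) = Σᵢ (xᵢ² + yᵢ² − 2xᵢyᵢsᵢ)`. -/
noncomputable def qMinus (n : ℕ) (x y s : Fin n → ℝ) : ℝ :=
  ∑ i, (x i ^ 2 + y i ^ 2 - 2 * x i * y i * s i)

/-- The global kernel `H_{λ,ε}`: equal to `exp(−(1−ε)|y|²)` when `Σᵢ xᵢyᵢsᵢ ≤ 0`,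
and to `q₊^λ · exp(−((1−ε)/2)(|y|² − |x|² + √(q₊q₋)))` when `Σᵢ xᵢyᵢsᵢ > 0`. -/
noncomputable def Hker (n : ℕ) (lam eps : ℝ) (x y s : Fin n → ℝ) : ℝ :=
  if (∑ i, x i * y i * s i) ≤ 0 then
    Real.exp (-(1 - eps) * ∑ i, y i ^ 2)
  else
    qPlus n x y s ^ lam *
      Real.exp (-((1 - eps) / 2) *
        ((∑ i, y i ^ 2) - (∑ i, x i ^ 2) +
          Real.sqrt (qPlus n x y s * qMinus n x y s)))

/-- The global condition in a convenient polynomial form. -/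
lemma hk_global (lam C0 A B q : ℝ) (hl : 1 ≤ lam) (hC : 8 * lam < C0) (hA : 0 ≤ A) (hB : 0 ≤ B)
    (h : C0 ^ 2 / (1 + Real.sqrt A + Real.sqrt B) ^ 2 < q) :
    0 < q ∧ 64 * lam ^ 2 < q * (3 * (1 + (A + B))) := by
  have hX := Real.sqrt_nonneg A
  have hY := Real.sqrt_nonneg B
  have hX2 := Real.sq_sqrt hA
  have hY2 := Real.sq_sqrt hB
  set X := Real.sqrt A
  set Y := Real.sqrt B
  have hpos : 0 < (1 + X + Y) ^ 2 := by positivity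
  have hq : 0 < q := lt_of_le_of_lt (by positivity) h
  refine ⟨hq, ?_⟩
  rw [div_lt_iff₀ hpos] at h
  have h1 : (1 + X + Y) ^ 2 ≤ 3 * (1 + (A + B)) := by
    nlinarith [sq_nonneg (1 - X), sq_nonneg (1 - Y), sq_nonneg (X - Y)]
  have h2 : q * (1 + X + Y) ^ 2 ≤ q * (3 * (1 + (A + B))) :=
    mul_le_mul_of_nonneg_left h1 hq.le
  nlinarith

/-- The case of nonpositive inner sum. -/
lemma hk_neg (lam A B S t : ℝ) (hl : 1 ≤ lam) (hA : 0 ≤ A) (hB : 0 ≤ B)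
    (hS : S ≤ 0) (hS2 : 0 ≤ A + B + 2 * S)
    (hq : 0 < A + B - 2 * S) (h : 64 * lam ^ 2 < (A + B - 2 * S) * (3 * (1 + (A + B))))
    (ht0 : 0 < t) (ht1 : t < 1) :
    t ^ (-lam) * Real.exp (-((1 - t) * A + B - 2 * Real.sqrt (1 - t) * S) / t) ≤
      Real.exp (-B) := by
  have ha : lam ≤ A + B := by
    by_contra hlt
    push Not at hlt
    nlinarith [mul_nonneg hA hB]
  rw [Real.rpow_def_of_pos ht0, ← Real.exp_add, Real.exp_le_exp]
  have hlog : -Real.log t ≤ 1 / t - 1 := by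
    have := Real.log_le_sub_one_of_pos (show 0 < 1 / t by positivity)
    rwa [one_div, Real.log_inv, ← one_div] at this
  have hr : 0 ≤ 1 / t - 1 := by
    rw [sub_nonneg, le_div_iff₀ ht0]; linarith
  have h1 : lam * (-Real.log t) ≤ (A + B) * (1 / t - 1) :=
    (mul_le_mul_of_nonneg_left hlog (by linarith)).trans (mul_le_mul_of_nonneg_right ha hr)
  have h2 : -((1 - t) * A + B - 2 * Real.sqrt (1 - t) * S) / t
      = -(A + B) * (1 / t - 1) - B + 2 * Real.sqrt (1 - t) * S / t := by
    field_simp; ring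
  have h3 : 2 * Real.sqrt (1 - t) * S / t ≤ 0 := by
    apply div_nonpos_of_nonpos_of_nonneg _ ht0.le
    exact mul_nonpos_of_nonneg_of_nonpos (by positivity) hS
  rw [h2]
  nlinarith

/-- The bound `z^lam exp (-D) ≤ C`. -/
lemma hk_z (lam z g : ℝ) (hl : 1 ≤ lam) (hz : 0 < z) (hg : 1 ≤ g) :
    z ^ lam * Real.exp (-((g * z - 1) ^ 2 / (4 * z))) ≤ 4 ^ lam + (16 * lam) ^ lam := by
  have hl0 : 0 < lam := by linarith
  have p1 : (0:ℝ) ≤ 4 ^ lam := by positivity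
  have p2 : (0:ℝ) ≤ (16 * lam) ^ lam := by positivity
  rcases le_total z 4 with h | h
  · have e1 : z ^ lam ≤ 4 ^ lam := Real.rpow_le_rpow hz.le h hl0.le
    have e2 : Real.exp (-((g * z - 1) ^ 2 / (4 * z))) ≤ 1 := by
      rw [Real.exp_le_one_iff, neg_nonpos]; positivity
    have : z ^ lam * Real.exp (-((g * z - 1) ^ 2 / (4 * z))) ≤ 4 ^ lam * 1 :=
      mul_le_mul e1 e2 (Real.exp_pos _).le p1
    linarith
  · have e1 : z / 16 ≤ (g * z - 1) ^ 2 / (4 * z) := by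
      rw [le_div_iff₀ (by positivity)]
      have : z / 2 ≤ g * z - 1 := by nlinarith
      nlinarith
    have e2 : z ≤ (16 * lam) * Real.exp (z / (16 * lam)) := by
      have := Real.add_one_le_exp (z / (16 * lam))
      have h3 : z / (16 * lam) ≤ Real.exp (z / (16 * lam)) := by linarith
      rw [div_le_iff₀ (by positivity)] at h3
      linarith
    have e3 : z ^ lam ≤ (16 * lam) ^ lam * Real.exp (z / 16) := by
      have := Real.rpow_le_rpow hz.le e2 hl0.le
      rw [Real.mul_rpow (by positivity) (Real.exp_pos _).le, ← Real.exp_mul] at this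
      convert this using 3
      field_simp
    have e4 : Real.exp (-((g * z - 1) ^ 2 / (4 * z))) ≤ Real.exp (-(z / 16)) := by
      rw [Real.exp_le_exp]; linarith
    calc _ ≤ ((16 * lam) ^ lam * Real.exp (z / 16)) * Real.exp (-(z / 16)) :=
          mul_le_mul e3 e4 (Real.exp_pos _).le (by positivity)
      _ = (16 * lam) ^ lam := by rw [mul_assoc, ← Real.exp_add]; simp
      _ ≤ _ := by linarith

/-- The case of positive inner sum. -/
lemma hk_pos (lam A B S t : ℝ) (hl : 1 ≤ lam) (hA : 0 ≤ A) (hB : 0 ≤ B)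
    (hS : 0 < S)
    (hq : 0 < A + B - 2 * S) (h : 64 * lam ^ 2 < (A + B - 2 * S) * (3 * (1 + (A + B))))
    (ht0 : 0 < t) (ht1 : t < 1) :
    t ^ (-lam) * Real.exp (-((1 - t) * A + B - 2 * Real.sqrt (1 - t) * S) / t) ≤
      (4 ^ lam + (16 * lam) ^ lam) * ((A + B + 2 * S) ^ lam *
        Real.exp (-(1 / 2) * (B - A + Real.sqrt ((A + B + 2 * S) * (A + B - 2 * S))))) := by
  have hl0 : 0 < lam := by linarith
  set P := A + B + 2 * S with hP
  set M := A + B - 2 * S with hM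
  have hPpos : 0 < P := by linarith
  have ha : 1 ≤ A + B := by
    by_contra hlt
    push Not at hlt
    nlinarith
  have hPM : 1 ≤ P * M := by nlinarith
  have hg : 1 ≤ Real.sqrt (P * M) := Real.one_le_sqrt.mpr hPM
  have hg2 : Real.sqrt (P * M) ^ 2 = P * M := Real.sq_sqrt (by linarith)
  set g := Real.sqrt (P * M)
  have hw2 : Real.sqrt (1 - t) ^ 2 = 1 - t := Real.sq_sqrt (by linarith)
  have hw0 : 0 ≤ Real.sqrt (1 - t) := Real.sqrt_nonneg _
  set w := Real.sqrt (1 - t)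
  have hw1 : w < 1 := by nlinarith
  have htw : t = (1 - w) * (1 + w) := by linarith
  have hm : 0 < 1 - w := by linarith
  have hp : 0 < 1 + w := by linarith
  set z := (1 + w) / (1 - w) / P with hz
  have hz0 : 0 < z := by positivity
  have key : -((1 - t) * A + B - 2 * w * S) / t =
      -((g * z - 1) ^ 2 / (4 * z)) + -(1 / 2) * (B - A + g) := by
    have e : (g * z - 1) ^ 2 / (4 * z) = (P * M * z + 1 / z - 2 * g) / 4 := by
      rw [← hg2]; field_simp; ring
    rw [e, hz, ← hw2, htw]
    field_simp
    rw [hP, hM]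
    ring
  have hzt : t ^ (-lam) ≤ z ^ lam * P ^ lam := by
    rw [← Real.mul_rpow hz0.le hPpos.le, Real.rpow_neg ht0.le, ← Real.inv_rpow ht0.le]
    apply Real.rpow_le_rpow (by positivity) _ hl0.le
    rw [hz, div_mul_cancel₀ _ hPpos.ne', htw, inv_eq_one_div, div_le_div_iff₀ (by positivity) hm]
    nlinarith [mul_nonneg hm.le hw0, mul_nonneg hm.le (mul_nonneg hw0 hw0)]
  have hk := hk_z lam z g hl hz0 hg
  rw [key, Real.exp_add]
  calc _ ≤ (z ^ lam * P ^ lam) * (Real.exp (-((g * z - 1) ^ 2 / (4 * z))) *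
            Real.exp (-(1 / 2) * (B - A + g))) :=
          mul_le_mul_of_nonneg_right hzt (by positivity)
    _ = (z ^ lam * Real.exp (-((g * z - 1) ^ 2 / (4 * z)))) * (P ^ lam *
            Real.exp (-(1 / 2) * (B - A + g))) := by ring
    _ ≤ _ := mul_le_mul_of_nonneg_right hk (by positivity)

/-- **Key pointwise kernel estimate for the global heat maximal operator** (Section 4).
Let `n ≥ 1`, `λ ≥ n`. For every `C₀ > 8λ` there is `C > 0` such that on the global
region `q₋(x,y,s) > C₀²/(1+|x|+|y|)²` (with `x, y ∈ [0,∞)ⁿ`, `s ∈ (−1,1)ⁿ`), one has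
`sup_{t∈(0,1)} t^{−λ} exp(−q₋(√(1−t)x, y, s)/t) ≤ C·H_{λ,0}(x,y,s)`. -/
theorem heat_global_kernel_estimate (n : ℕ) (hn : 1 ≤ n) (lam : ℝ)
    (hlam : (n : ℝ) ≤ lam) (C0 : ℝ) (hC0 : 8 * lam < C0) :
    ∃ C > (0:ℝ), ∀ x y s : Fin n → ℝ,
      (∀ i, 0 ≤ x i) → (∀ i, 0 ≤ y i) → (∀ i, s i ∈ Set.Ioo (-1 : ℝ) 1) →
      C0 ^ 2 / (1 + Real.sqrt (∑ i, x i ^ 2) + Real.sqrt (∑ i, y i ^ 2)) ^ 2 <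
        qMinus n x y s →
      ∀ t ∈ Set.Ioo (0 : ℝ) 1,
        t ^ (-lam) *
          Real.exp (-(qMinus n (fun i => Real.sqrt (1 - t) * x i) y s) / t) ≤
        C * Hker n lam 0 x y s := by
  have hn1 : (1:ℝ) ≤ n := by exact_mod_cast hn
  have hl : 1 ≤ lam := hn1.trans hlam
  have hl0 : 0 < lam := by linarith
  refine ⟨1 + (4 ^ lam + (16 * lam) ^ lam), by positivity, ?_⟩
  intro x y s hx hy hs hglob t ht
  have hA : 0 ≤ ∑ i, x i ^ 2 := Finset.sum_nonneg fun i _ => sq_nonneg _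
  have hB : 0 ≤ ∑ i, y i ^ 2 := Finset.sum_nonneg fun i _ => sq_nonneg _
  have eM : qMinus n x y s = (∑ i, x i ^ 2) + (∑ i, y i ^ 2) - 2 * ∑ i, x i * y i * s i := by
    simp only [qMinus, Finset.sum_sub_distrib, Finset.sum_add_distrib, Finset.mul_sum, mul_assoc]
  have eP : qPlus n x y s = (∑ i, x i ^ 2) + (∑ i, y i ^ 2) + 2 * ∑ i, x i * y i * s i := by
    simp only [qPlus, Finset.sum_add_distrib, Finset.mul_sum, mul_assoc]
  have hw2 : Real.sqrt (1 - t) ^ 2 = 1 - t := Real.sq_sqrt (by linarith [ht.2])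
  have eT : qMinus n (fun i => Real.sqrt (1 - t) * x i) y s =
      (1 - t) * (∑ i, x i ^ 2) + (∑ i, y i ^ 2)
        - 2 * Real.sqrt (1 - t) * ∑ i, x i * y i * s i := by
    generalize Real.sqrt (1 - t) = w at hw2 ⊢
    rw [← hw2]
    simp only [qMinus, Finset.sum_sub_distrib, Finset.sum_add_distrib, Finset.mul_sum, mul_pow]
    congr 1
    exact Finset.sum_congr rfl fun i _ => by ring
  have hPn : 0 ≤ qPlus n x y s := by
    refine Finset.sum_nonneg fun i _ => ?_
    have h1 := mul_nonneg (mul_nonneg (hx i) (hy i)) (by linarith [(hs i).1] : 0 ≤ s i + 1)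
    nlinarith [sq_nonneg (x i - y i)]
  obtain ⟨hq, h64⟩ := hk_global lam C0 _ _ _ hl hC0 hA hB hglob
  rw [eM] at hq h64
  rw [eP] at hPn
  rw [eT, Hker, eP, eM]
  have p1 : (0:ℝ) ≤ 4 ^ lam := by positivity
  have p2 : (0:ℝ) ≤ (16 * lam) ^ lam := by positivity
  split_ifs with hS
  · refine (hk_neg lam _ _ _ t hl hA hB hS hPn hq h64 ht.1 ht.2).trans ?_
    have e : -(1 - (0:ℝ)) * ∑ i, y i ^ 2 = -∑ i, y i ^ 2 := by ring
    rw [e]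
    nlinarith [Real.exp_pos (-∑ i, y i ^ 2)]
  · push Not at hS
    refine (hk_pos lam _ _ _ t hl hA hB hS hq h64 ht.1 ht.2).trans ?_
    rw [sub_zero]
    apply mul_le_mul_of_nonneg_right (by linarith)
    exact mul_nonneg (Real.rpow_nonneg hPn _) (Real.exp_pos _).le
end

section
/- Let n ≥ 1 and λ ≥ n be real (λ = n + α̂ with α̂ ≥ 0 in the paper), and let 0 < ε < 1/λ. For every C_0 > 8λ there exists C > 0 such that for all x, y ∈ [0,∞)^n and s ∈ (−1,1)^n with q_−(x,y,s) > C_0²/(1 + |x| + |y|)², one has ∫_0^1 t^{−(λ+1)} (1−t)^{−1/2} · exp(−(1−ε)·q_−(√(1−t)·x, y, s)/t) dt ≤ C·H_{λ,ε}(x,y,s), where √(1−t)·x = (√(1−t)x_1,…,√(1−t)x_n). -/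
open MeasureTheory

/-- `z^p e^{-δz}` is bounded. -/
lemma rpow_mul_exp_bdd (p δ : ℝ) (hp : 0 < p) (hδ : 0 < δ) :
    ∃ K > (0:ℝ), ∀ z > (0:ℝ), z ^ p * Real.exp (-δ * z) ≤ K := by
  refine ⟨(p / δ) ^ p, by positivity, fun z hz => ?_⟩
  have h1 : δ * z / p ≤ Real.exp (δ * z / p) := by
    have := Real.add_one_le_exp (δ * z / p); linarith
  have h2 : (δ * z / p) ^ p ≤ Real.exp (δ * z / p) ^ p :=
    Real.rpow_le_rpow (by positivity) h1 hp.le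
  rw [← Real.exp_mul, div_mul_cancel₀ _ hp.ne'] at h2
  have h3 : z ^ p = (p / δ) ^ p * (δ * z / p) ^ p := by
    rw [← Real.mul_rpow (by positivity) (by positivity)]
    congr 1; field_simp
  rw [h3, mul_assoc]
  have h4 : (δ * z / p) ^ p * Real.exp (-δ * z) ≤ 1 := by
    calc _ ≤ Real.exp (δ * z) * Real.exp (-δ * z) := by gcongr
      _ = 1 := by rw [← Real.exp_add]; simp
  have h5 : (0:ℝ) ≤ (p / δ) ^ p := by positivity
  nlinarith

lemma lint_half : ∫⁻ t in Set.Ioo (0:ℝ) 1, ENNReal.ofReal ((1 - t) ^ (-(1:ℝ)/2)) ≤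
    ENNReal.ofReal 2 := by
  have hi : IntervalIntegrable (fun t : ℝ => t ^ (-(1:ℝ)/2)) volume 0 1 :=
    intervalIntegral.intervalIntegrable_rpow' (by norm_num)
  have hi2 : IntervalIntegrable (fun t : ℝ => (1 - t) ^ (-(1:ℝ)/2)) volume 0 1 := by
    have := (hi.comp_sub_left 1).symm
    simpa using this
  have hI : ∫ t in (0:ℝ)..1, (1 - t) ^ (-(1:ℝ)/2) = 2 := by
    rw [intervalIntegral.integral_comp_sub_left (fun t : ℝ => t ^ (-(1:ℝ)/2)) 1]
    rw [integral_rpow (Or.inl (by norm_num))]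
    norm_num
  have hi3 : IntegrableOn (fun t : ℝ => (1 - t) ^ (-(1:ℝ)/2)) (Set.Ioo 0 1) volume := by
    have := (intervalIntegrable_iff_integrableOn_Ioo_of_le (zero_le_one)).1 hi2
    exact this
  rw [← ofReal_integral_eq_lintegral_ofReal hi3]
  · rw [← integral_Ioc_eq_integral_Ioo, ← intervalIntegral.integral_of_le zero_le_one, hI]
  · filter_upwards [ae_restrict_mem measurableSet_Ioo] with t ht
    exact Real.rpow_nonneg (by linarith [ht.2]) _

lemma lint_tail (lam t0 : ℝ) (hl : 1 ≤ lam) (h0 : 0 < t0) :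
    ∫⁻ t in Set.Ioi t0, ENNReal.ofReal (t ^ (-(lam + 1))) ≤ ENNReal.ofReal (t0 ^ (-lam)) := by
  rw [← ofReal_integral_eq_lintegral_ofReal (integrableOn_Ioi_rpow_of_lt (by linarith) h0)]
  · apply ENNReal.ofReal_le_ofReal
    rw [integral_Ioi_rpow_of_lt (by linarith) h0]
    have e : -(lam + 1) + 1 = -lam := by ring
    rw [e, neg_div_neg_eq]
    exact div_le_self (by positivity) hl
  · filter_upwards [ae_restrict_mem measurableSet_Ioi] with t ht
    exact Real.rpow_nonneg (h0.trans ht).le _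

lemma core_bound (lam δ : ℝ) (hl : 1 ≤ lam) (hδ : 0 < δ) :
    ∃ K > (0:ℝ), ∀ t0 : ℝ, 0 < t0 → t0 ≤ 1 →
      ∫⁻ t in Set.Ioo (0 : ℝ) 1,
        ENNReal.ofReal (t ^ (-(lam + 1)) * (1 - t) ^ (-(1:ℝ)/2) * Real.exp (-δ * (t0 / t))) ≤
      ENNReal.ofReal (K * t0 ^ (-lam)) := by
  obtain ⟨K, hK, hKb⟩ := rpow_mul_exp_bdd (lam + 1) δ (by linarith) hδ
  refine ⟨2 * K + 2 + 2 ^ (lam + 1) * 2, by positivity, fun t0 h0 h1 => ?_⟩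
  set f1 : ℝ → ENNReal := (Set.Ioc 0 t0).indicator
    (fun _ => ENNReal.ofReal (2 * (K * t0 ^ (-(lam + 1))))) with hf1
  set f2 : ℝ → ENNReal := (Set.Ioi t0).indicator
    (fun t => ENNReal.ofReal 2 * ENNReal.ofReal (t ^ (-(lam + 1)))) with hf2
  set f3 : ℝ → ENNReal := fun t =>
    ENNReal.ofReal (2 ^ (lam + 1)) * ENNReal.ofReal ((1 - t) ^ (-(1:ℝ)/2)) with hf3
  have m1 : Measurable f1 := by
    exact measurable_const.indicator measurableSet_Ioc
  have m2 : Measurable f2 := by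
    apply Measurable.indicator _ measurableSet_Ioi
    fun_prop
  have m3 : Measurable f3 := by rw [hf3]; fun_prop
  have hpt : ∀ t ∈ Set.Ioo (0:ℝ) 1,
      ENNReal.ofReal (t ^ (-(lam + 1)) * (1 - t) ^ (-(1:ℝ)/2) * Real.exp (-δ * (t0 / t))) ≤
        f1 t + f2 t + f3 t := by
    rintro t ⟨ht0, ht1⟩
    have hexp1 : Real.exp (-δ * (t0 / t)) ≤ 1 := by
      rw [Real.exp_le_one_iff]
      have : 0 ≤ δ * (t0 / t) := by positivity
      linarith
    have hone : 0 < 1 - t := by linarith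
    by_cases hh : t ≤ 1 / 2
    · have hs : (1 - t) ^ (-(1:ℝ)/2) ≤ 2 := by
        have : (1 - t) ^ (-(1:ℝ)/2) ≤ (1/2 : ℝ) ^ (-(1:ℝ)/2) :=
          Real.rpow_le_rpow_of_nonpos (by norm_num) (by linarith) (by norm_num)
        have h2 : (1/2 : ℝ) ^ (-(1:ℝ)/2) ≤ (1/2 : ℝ) ^ (-1:ℝ) :=
          Real.rpow_le_rpow_of_exponent_ge (by norm_num) (by norm_num) (by norm_num)
        have h3 : (1/2 : ℝ) ^ (-1:ℝ) = 2 := by rw [Real.rpow_neg_one]; norm_num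
        linarith
      by_cases hc : t ≤ t0
      · have e1 : f1 t = ENNReal.ofReal (2 * (K * t0 ^ (-(lam + 1)))) := by
          rw [hf1, Set.indicator_of_mem]; exact ⟨ht0, hc⟩
        rw [add_assoc, e1]
        refine le_trans (ENNReal.ofReal_le_ofReal ?_) le_self_add
        have hz := hKb (t0 / t) (by positivity)
        have e2 : (t0 / t) ^ (lam + 1) * t0 ^ (-(lam+1)) = t ^ (-(lam + 1)) := by
          rw [Real.div_rpow h0.le ht0.le, Real.rpow_neg h0.le, Real.rpow_neg ht0.le]
          have : 0 < t0 ^ (lam+1) := by positivity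
          field_simp
        calc t ^ (-(lam + 1)) * (1 - t) ^ (-(1:ℝ)/2) * Real.exp (-δ * (t0 / t))
            = (1 - t) ^ (-(1:ℝ)/2) *
              (((t0 / t) ^ (lam + 1) * Real.exp (-δ * (t0 / t))) * t0 ^ (-(lam+1))) := by
              rw [← e2]; ring
          _ ≤ 2 * (K * t0 ^ (-(lam + 1))) := by gcongr
      · have e1 : f2 t = ENNReal.ofReal 2 * ENNReal.ofReal (t ^ (-(lam + 1))) := by
          rw [hf2, Set.indicator_of_mem]; exact not_le.1 hc
        rw [add_comm (f1 t), add_assoc, e1, ← ENNReal.ofReal_mul (by norm_num)]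
        refine le_trans (ENNReal.ofReal_le_ofReal ?_) le_self_add
        calc t ^ (-(lam + 1)) * (1 - t) ^ (-(1:ℝ)/2) * Real.exp (-δ * (t0 / t))
            ≤ t ^ (-(lam + 1)) * 2 * 1 := by gcongr
          _ = _ := by ring
    · simp only [hf3]
      rw [← ENNReal.ofReal_mul (by positivity)]
      refine le_trans (ENNReal.ofReal_le_ofReal ?_) le_add_self
      have hs : t ^ (-(lam + 1)) ≤ 2 ^ (lam + 1) := by
        have : t ^ (-(lam + 1)) ≤ (1/2 : ℝ) ^ (-(lam + 1)) :=
          Real.rpow_le_rpow_of_nonpos (by norm_num) (by linarith) (by linarith)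
        have h3 : (1/2 : ℝ) ^ (-(lam + 1)) = 2 ^ (lam + 1) := by
          rw [one_div, Real.inv_rpow (by norm_num), Real.rpow_neg (by norm_num), inv_inv]
        linarith
      calc t ^ (-(lam + 1)) * (1 - t) ^ (-(1:ℝ)/2) * Real.exp (-δ * (t0 / t))
            ≤ 2 ^ (lam + 1) * (1 - t) ^ (-(1:ℝ)/2) * 1 := by gcongr
        _ = _ := by ring
  have i1 : ∫⁻ t in Set.Ioo (0:ℝ) 1, f1 t ≤ ENNReal.ofReal (2 * K * t0 ^ (-lam)) := by
    refine (setLIntegral_le_lintegral _ _).trans ?_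
    rw [hf1, lintegral_indicator measurableSet_Ioc, setLIntegral_const, Real.volume_Ioc,
      ← ENNReal.ofReal_mul (by positivity)]
    apply ENNReal.ofReal_le_ofReal
    have : t0 ^ (-lam) = t0 ^ (-(lam + 1)) * t0 := by
      rw [← Real.rpow_add_one h0.ne']; congr 1; ring
    rw [this]; apply le_of_eq; ring
  have i2 : ∫⁻ t in Set.Ioo (0:ℝ) 1, f2 t ≤ ENNReal.ofReal (2 * t0 ^ (-lam)) := by
    refine (setLIntegral_le_lintegral _ _).trans ?_
    rw [hf2, lintegral_indicator measurableSet_Ioi, lintegral_const_mul _ (by fun_prop),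
      ENNReal.ofReal_mul (by norm_num)]
    gcongr
    exact lint_tail lam t0 hl h0
  have i3 : ∫⁻ t in Set.Ioo (0:ℝ) 1, f3 t ≤ ENNReal.ofReal (2 ^ (lam + 1) * 2 * t0 ^ (-lam)) := by
    rw [hf3, lintegral_const_mul _ (by fun_prop)]
    have : (1:ℝ) ≤ t0 ^ (-lam) := Real.one_le_rpow_of_pos_of_le_one_of_nonpos h0 h1 (by linarith)
    calc _ ≤ ENNReal.ofReal (2 ^ (lam + 1)) * ENNReal.ofReal 2 := by gcongr; exact lint_half
      _ = ENNReal.ofReal (2 ^ (lam + 1) * 2) := by rw [ENNReal.ofReal_mul (by positivity)]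
      _ ≤ _ := ENNReal.ofReal_le_ofReal (le_mul_of_one_le_right (by positivity) this)
  calc _ ≤ ∫⁻ t in Set.Ioo (0:ℝ) 1, (f1 t + f2 t + f3 t) :=
        setLIntegral_mono' measurableSet_Ioo hpt
    _ = (∫⁻ t in Set.Ioo (0:ℝ) 1, f1 t) + (∫⁻ t in Set.Ioo (0:ℝ) 1, f2 t) +
        ∫⁻ t in Set.Ioo (0:ℝ) 1, f3 t := by
        rw [lintegral_add_right _ m3, lintegral_add_right _ m2]
    _ ≤ _ := add_le_add (add_le_add i1 i2) i3
    _ = _ := by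
      rw [← ENNReal.ofReal_add (by positivity) (by positivity),
        ← ENNReal.ofReal_add (by positivity) (by positivity)]
      congr 1; ring

/-- The pointwise lower bound of the exponent, in terms of `P = √q₊`, `M = √q₋`. -/
lemma exponent_lower (P M r : ℝ) (hM : 0 < M) (hPM : M < P) (h1 : 1 ≤ P * M)
    (hr0 : 0 ≤ r) (hr1 : r ≤ 1) :
    (4 * P * M / (P + M) ^ 2) / 4 - (1 - r ^ 2) / 2 ≤
      (P ^ 2 + M ^ 2) / 2 - (P ^ 2 - M ^ 2) / 2 * r - (P + M) ^ 2 / 4 * (1 - r ^ 2) := by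
  have hP : 0 < P := hM.trans hPM
  obtain ⟨r0, hr0d⟩ : ∃ r0, r0 = (P - M) / (P + M) := ⟨_, rfl⟩
  obtain ⟨m, hm⟩ : ∃ m, m = (P + M) ^ 2 / 4 := ⟨_, rfl⟩
  obtain ⟨t0, ht0d⟩ : ∃ t0, t0 = 4 * P * M / (P + M) ^ 2 := ⟨_, rfl⟩
  have ht : t0 = 1 - r0 ^ 2 := by rw [ht0d, hr0d]; field_simp; ring
  have ht0 : 0 < t0 := by rw [ht0d]; positivity
  have hmt : m * t0 = P * M := by rw [hm, ht0d]; field_simp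
  have hmpos : 0 < m := by rw [hm]; positivity
  have hr00 : 0 ≤ r0 := by rw [hr0d]; apply div_nonneg <;> linarith
  have hr01 : r0 ≤ 1 := by rw [hr0d, div_le_one (by linarith)]; linarith
  have e : (P ^ 2 + M ^ 2) / 2 - (P ^ 2 - M ^ 2) / 2 * r - (P + M) ^ 2 / 4 * (1 - r ^ 2)
      = m * (r - r0) ^ 2 := by
    rw [hm, hr0d]; field_simp; ring
  rw [e, ← ht0d]
  obtain ⟨t, htd⟩ : ∃ t, t = 1 - r ^ 2 := ⟨_, rfl⟩
  rw [← htd]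
  have h2 : (t - t0) ^ 2 / 4 ≤ (r - r0) ^ 2 := by
    have : t - t0 = -((r - r0) * (r + r0)) := by rw [htd, ht]; ring
    rw [this]
    have h4 : (r + r0) ^ 2 ≤ 4 := by nlinarith
    have := mul_le_mul_of_nonneg_left h4 (sq_nonneg (r - r0))
    nlinarith
  have h3 : t0 * (t0 / 4 - t / 2) ≤ t0 * (m * (r - r0) ^ 2) := by
    have h5 : t0 * (m * (r - r0) ^ 2) = (P * M) * (r - r0) ^ 2 := by rw [← hmt]; ring
    rw [h5]
    have : 1 * (r - r0) ^ 2 ≤ (P * M) * (r - r0) ^ 2 := by gcongr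
    nlinarith [sq_nonneg t]
  exact le_of_mul_le_mul_left h3 ht0

lemma global_PM (P M : ℝ) (hM : 0 < M) (hPM : M < P) (T : ℝ) (hT0 : 0 ≤ T)
    (hT : T ^ 2 ≤ P ^ 2 + M ^ 2) (h : 8 < M * (1 + T)) : 1 ≤ P * M := by
  have hT2 : T ≤ 3 / 2 * P := by
    apply abs_le_of_sq_le_sq' _ (by linarith) |>.2
    nlinarith
  have h8 : 8 < M * (1 + 3 / 2 * P) := by nlinarith
  by_contra hc
  push Not at hc
  have : 6 < M := by nlinarith
  nlinarith

set_option maxHeartbeats 1600000 in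
/-- **Kernel estimate for the global Riesz–Laguerre transforms** (Section 5).
Let `n ≥ 1`, `λ ≥ n`, `0 < ε < 1/λ`. For every `C₀ > 8λ` there is `C > 0` such that
on the global region `q₋(x,y,s) > C₀²/(1+|x|+|y|)²` (`x, y ∈ [0,∞)ⁿ`, `s ∈ (−1,1)ⁿ`),
`∫₀¹ t^{−(λ+1)} (1−t)^{−1/2} exp(−(1−ε) q₋(√(1−t)x,y,s)/t) dt ≤ C·H_{λ,ε}(x,y,s)`. -/
theorem riesz_global_kernel_estimate (n : ℕ) (hn : 1 ≤ n) (lam : ℝ)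
    (hlam : (n : ℝ) ≤ lam) (eps : ℝ) (heps0 : 0 < eps) (heps1 : eps < 1 / lam)
    (C0 : ℝ) (hC0 : 8 * lam < C0) :
    ∃ C > (0:ℝ), ∀ x y s : Fin n → ℝ,
      (∀ i, 0 ≤ x i) → (∀ i, 0 ≤ y i) → (∀ i, s i ∈ Set.Ioo (-1 : ℝ) 1) →
      C0 ^ 2 / (1 + Real.sqrt (∑ i, x i ^ 2) + Real.sqrt (∑ i, y i ^ 2)) ^ 2 <
        qMinus n x y s →
      ∫⁻ t in Set.Ioo (0 : ℝ) 1,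
          ENNReal.ofReal (t ^ (-(lam + 1)) * (1 - t) ^ (-(1:ℝ)/2) *
            Real.exp (-(1 - eps) *
              qMinus n (fun i => Real.sqrt (1 - t) * x i) y s / t)) ≤
        ENNReal.ofReal (C * Hker n lam eps x y s) := by
  have hn1 : (1:ℝ) ≤ n := by exact_mod_cast hn
  have hl : 1 ≤ lam := hn1.trans hlam
  have he1 : eps < 1 := heps1.trans_le (by rw [div_le_one (by linarith)]; exact hl)
  have hk : 0 < 1 - eps := by linarith
  obtain ⟨K, hK, hKb⟩ := core_bound lam ((1 - eps) / 4) hl (by linarith)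
  refine ⟨Real.exp ((1 - eps) / 2) * K, by positivity, ?_⟩
  intro x y s hx hy hs hG
  obtain ⟨X, hX⟩ : ∃ X, X = ∑ i, x i ^ 2 := ⟨_, rfl⟩
  obtain ⟨Y, hY⟩ : ∃ Y, Y = ∑ i, y i ^ 2 := ⟨_, rfl⟩
  obtain ⟨B, hB⟩ : ∃ B, B = ∑ i, x i * y i * s i := ⟨_, rfl⟩
  have hX0 : 0 ≤ X := by rw [hX]; positivity
  have hY0 : 0 ≤ Y := by rw [hY]; positivity
  have hqm : qMinus n x y s = X + Y - 2 * B := by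
    rw [qMinus, hX, hY, hB, Finset.mul_sum, ← Finset.sum_add_distrib, ← Finset.sum_sub_distrib]
    exact Finset.sum_congr rfl fun i _ => by ring
  have hqp : qPlus n x y s = X + Y + 2 * B := by
    rw [qPlus, hX, hY, hB, Finset.mul_sum, ← Finset.sum_add_distrib, ← Finset.sum_add_distrib]
    exact Finset.sum_congr rfl fun i _ => by ring
  have hqt : ∀ r : ℝ, qMinus n (fun i => r * x i) y s = r ^ 2 * X + Y - 2 * r * B := by
    intro r
    rw [qMinus, hX, hY, hB, Finset.mul_sum, Finset.mul_sum, ← Finset.sum_add_distrib,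
      ← Finset.sum_sub_distrib]
    exact Finset.sum_congr rfl fun i _ => by ring
  have hqp0 : 0 ≤ X + Y + 2 * B := by
    rw [← hqp, qPlus]
    refine Finset.sum_nonneg fun i _ => ?_
    have h1 := (hs i).1
    have h2 := mul_nonneg (hx i) (hy i)
    nlinarith [sq_nonneg (x i - y i)]
  rw [← hX, ← hY, hqm] at hG
  obtain ⟨T, hTd⟩ : ∃ T, T = Real.sqrt X + Real.sqrt Y := ⟨_, rfl⟩
  have hT0 : 0 ≤ T := by rw [hTd]; positivity
  have hT2 : T ^ 2 ≤ 2 * (X + Y) := by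
    rw [hTd]
    nlinarith [Real.sq_sqrt hX0, Real.sq_sqrt hY0, sq_nonneg (Real.sqrt X - Real.sqrt Y)]
  rw [add_assoc, ← hTd, div_lt_iff₀ (by positivity)] at hG
  have hqm0 : 0 < X + Y - 2 * B := by
    by_contra hc
    push Not at hc
    have h1 : (0:ℝ) ≤ (1 + T) ^ 2 := by positivity
    have h2 : 0 < C0 ^ 2 := by have : 0 < C0 := by linarith
                               positivity
    nlinarith
  set M := Real.sqrt (X + Y - 2 * B) with hMd
  have hM : 0 < M := Real.sqrt_pos.2 hqm0
  have hM2 : M ^ 2 = X + Y - 2 * B := Real.sq_sqrt hqm0.le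
  have h8 : 8 < M * (1 + T) := by
    rw [← hM2, ← mul_pow] at hG
    have := lt_of_pow_lt_pow_left₀ 2 (by positivity) hG
    linarith
  -- reduction to a pointwise bound
  have key : ∀ t0 E : ℝ, 0 < t0 → t0 ≤ 1 →
      (∀ t ∈ Set.Ioo (0:ℝ) 1, t * E + (t0 / 4 - t / 2) ≤
        (1 - t) * X + Y - 2 * Real.sqrt (1 - t) * B) →
      ∫⁻ t in Set.Ioo (0 : ℝ) 1,
          ENNReal.ofReal (t ^ (-(lam + 1)) * (1 - t) ^ (-(1:ℝ)/2) *
            Real.exp (-(1 - eps) *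
              qMinus n (fun i => Real.sqrt (1 - t) * x i) y s / t)) ≤
        ENNReal.ofReal (Real.exp ((1 - eps) / 2) * K *
          (t0 ^ (-lam) * Real.exp (-(1 - eps) * E))) := by
    intro t0 E h0 h1 hE
    have hpt : ∀ t ∈ Set.Ioo (0:ℝ) 1,
        ENNReal.ofReal (t ^ (-(lam + 1)) * (1 - t) ^ (-(1:ℝ)/2) *
            Real.exp (-(1 - eps) *
              qMinus n (fun i => Real.sqrt (1 - t) * x i) y s / t)) ≤
        ENNReal.ofReal (Real.exp ((1 - eps) / 2) * Real.exp (-(1 - eps) * E)) *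
          ENNReal.ofReal (t ^ (-(lam + 1)) * (1 - t) ^ (-(1:ℝ)/2) *
            Real.exp (-((1 - eps) / 4) * (t0 / t))) := by
      intro t ht
      have ht0 := ht.1
      have ht1 : 0 < 1 - t := by linarith [ht.2]
      rw [← ENNReal.ofReal_mul (by positivity)]
      apply ENNReal.ofReal_le_ofReal
      have hexp : Real.exp (-(1 - eps) *
              qMinus n (fun i => Real.sqrt (1 - t) * x i) y s / t) ≤
          Real.exp ((1 - eps) / 2) * Real.exp (-(1 - eps) * E) *
            Real.exp (-((1 - eps) / 4) * (t0 / t)) := by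
        rw [← Real.exp_add, ← Real.exp_add, Real.exp_le_exp, hqt, Real.sq_sqrt ht1.le,
          div_le_iff₀ ht0]
        have h := mul_le_mul_of_nonneg_left (hE t ht) hk.le
        have e : ((1 - eps) / 2 + -(1 - eps) * E + -((1 - eps) / 4) * (t0 / t)) * t =
            -((1 - eps) * (t * E + (t0 / 4 - t / 2))) := by
          field_simp; ring
        rw [e]; linarith
      have hw : 0 ≤ t ^ (-(lam + 1)) * (1 - t) ^ (-(1:ℝ)/2) := by positivity
      calc _ ≤ _ := mul_le_mul_of_nonneg_left hexp hw
        _ = _ := by ring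
    calc _ ≤ _ := setLIntegral_mono' measurableSet_Ioo hpt
      _ = _ := lintegral_const_mul _ (by fun_prop)
      _ ≤ _ := mul_le_mul_right (hKb t0 h0 h1) _
      _ = _ := by
        rw [← ENNReal.ofReal_mul (by positivity)]
        congr 1; ring
  by_cases hBs : B ≤ 0
  · rw [Hker, if_pos (hB ▸ hBs), ← hY]
    have h := key 1 Y one_pos le_rfl ?_
    · simpa using h
    · rintro t ⟨ht0, ht1⟩
      have ha : 1 ≤ X + Y := by
        by_contra hc
        push Not at hc
        have hM2' : M < 2 := by nlinarith
        have hT2' : T < 2 := by nlinarith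
        nlinarith
      have h1 : 0 ≤ Real.sqrt (1 - t) * (-B) :=
        mul_nonneg (Real.sqrt_nonneg _) (by linarith)
      nlinarith
  · push Not at hBs
    rw [Hker, if_neg (by rw [← hB]; linarith), ← hY, ← hX, hqp, hqm]
    set P := Real.sqrt (X + Y + 2 * B) with hPd
    have hP2 : P ^ 2 = X + Y + 2 * B := Real.sq_sqrt hqp0
    have hP0 : 0 ≤ P := Real.sqrt_nonneg _
    have hPM : M < P := Real.sqrt_lt_sqrt hqm0.le (by linarith)
    have hP : 0 < P := hM.trans hPM
    have h1 : 1 ≤ P * M := global_PM P M hM hPM T hT0 (by linarith) h8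
    have hS : Real.sqrt ((X + Y + 2 * B) * (X + Y - 2 * B)) = P * M := Real.sqrt_mul hqp0 _
    rw [hS]
    have ht01 : 4 * P * M / (P + M) ^ 2 ≤ 1 := by
      rw [div_le_one (by positivity)]
      nlinarith [sq_nonneg (P - M)]
    have ht00 : 0 < 4 * P * M / (P + M) ^ 2 := by positivity
    refine (key (4 * P * M / (P + M) ^ 2) ((Y - X + P * M) / 2) ht00 ht01 ?_).trans ?_
    · rintro t ⟨ht0, ht1⟩
      have h := exponent_lower P M (Real.sqrt (1 - t)) hM hPM h1 (Real.sqrt_nonneg _)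
        (Real.sqrt_le_one.2 (by linarith))
      rw [Real.sq_sqrt (by linarith), show (P + M) ^ 2 = P ^ 2 + M ^ 2 + 2 * (P * M) by ring] at h
      rw [show (P + M) ^ 2 = P ^ 2 + M ^ 2 + 2 * (P * M) by ring]
      obtain ⟨W, hW⟩ : ∃ W, W = 4 * P * M / (P ^ 2 + M ^ 2 + 2 * (P * M)) := ⟨_, rfl⟩
      rw [← hW] at h ⊢
      rw [hP2, hM2] at h
      linarith
    · apply ENNReal.ofReal_le_ofReal
      have e : -(1 - eps) * ((Y - X + P * M) / 2) = -((1 - eps) / 2) * (Y - X + P * M) := by ring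
      rw [e]
      have hfin : (4 * P * M / (P + M) ^ 2) ^ (-lam) ≤ (X + Y + 2 * B) ^ lam := by
        rw [Real.rpow_neg ht00.le, ← Real.inv_rpow ht00.le, ← hP2]
        apply Real.rpow_le_rpow (by positivity) _ (by linarith)
        rw [inv_div, div_le_iff₀ (by positivity)]
        nlinarith [mul_le_mul_of_nonneg_left h1 (sq_nonneg P)]
      gcongr
end

section
/- Let k ∈ ℕ with k ≥ 1 and let a > 0. There exist constants C > 0 and c > 0 such that for every measurable function h : ℝ^k → [0,∞] and every x̄ ∈ ℝ^k, ∫_{{ȳ ∈ ℝ^k : 2|x̄−ȳ| ≥ |x̄+ȳ|}} |x̄+ȳ|^k · e^{−a|x̄−ȳ||x̄+ȳ|} · h(ȳ) dȳ ≤ C · Σ_{ℓ=0}^∞ e^{−cℓ²} ∫_{B(−x̄, ℓ+1)} h(ȳ) dȳ, where B(−x̄, r) denotes the Euclidean ball of center −x̄ and radius r and the integrals are with respect to Lebesgue measure. -/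
open MeasureTheory

lemma T1_aux (k : ℕ) (b : ℝ) (hb : 0 < b) (t : ℝ) :
    t ^ k ≤ (1 + k.factorial / b ^ k) * Real.exp (b * t ^ 2) := by
  have h1 := Real.pow_div_factorial_le_exp (b * t ^ 2) (by positivity) k
  have h2 : t ^ k ≤ 1 + (t ^ 2) ^ k := by
    rw [← pow_mul, mul_comm 2 k, pow_mul]
    nlinarith [sq_nonneg (t ^ k - 1), sq_nonneg (t ^ k)]
  have h3 : 1 ≤ Real.exp (b * t ^ 2) := Real.one_le_exp (by positivity)
  have h4 : (t ^ 2) ^ k = k.factorial / b ^ k * ((b * t ^ 2) ^ k / k.factorial) := by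
    have : (k.factorial : ℝ) ≠ 0 := by positivity
    rw [mul_pow]
    field_simp
  have h5 : (t ^ 2) ^ k ≤ k.factorial / b ^ k * Real.exp (b * t ^ 2) := by
    rw [h4]
    gcongr
  linarith

/-- **Bound for the operator `T₁`** (proof of Proposition 3.1). Let `k ≥ 1`, `a > 0`.
There are `C, c > 0` such that for every measurable `h : ℝᵏ → [0,∞]` and every `x̄ ∈ ℝᵏ`,
`∫_{2|x̄−ȳ| ≥ |x̄+ȳ|} |x̄+ȳ|ᵏ e^{−a|x̄−ȳ||x̄+ȳ|} h(ȳ) dȳ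
  ≤ C Σ_{ℓ=0}^∞ e^{−cℓ²} ∫_{B(−x̄, ℓ+1)} h(ȳ) dȳ`. -/
theorem T1_gaussian_annuli_bound (k : ℕ) (hk : 1 ≤ k) (a : ℝ) (ha : 0 < a) :
    ∃ C > (0:ℝ), ∃ c > (0:ℝ),
      ∀ h : EuclideanSpace ℝ (Fin k) → ENNReal, Measurable h →
        ∀ xb : EuclideanSpace ℝ (Fin k),
          (∫⁻ yb in {yb : EuclideanSpace ℝ (Fin k) | ‖xb + yb‖ ≤ 2 * ‖xb - yb‖},
              ENNReal.ofReal (‖xb + yb‖ ^ k *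
                Real.exp (-a * ‖xb - yb‖ * ‖xb + yb‖)) * h yb) ≤
            ENNReal.ofReal C *
              ∑' ℓ : ℕ, ENNReal.ofReal (Real.exp (-c * (ℓ : ℝ) ^ 2)) *
                ∫⁻ yb in Metric.ball (-xb) ((ℓ : ℝ) + 1), h yb := by
  have hb : 0 < a / 4 := by positivity
  have hC : 0 < 1 + (k.factorial : ℝ) / (a / 4) ^ k := by positivity
  refine ⟨1 + k.factorial / (a / 4) ^ k, hC, a / 4, hb, ?_⟩
  intro h hh xb
  have hS : MeasurableSet {yb : EuclideanSpace ℝ (Fin k) | ‖xb + yb‖ ≤ 2 * ‖xb - yb‖} :=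
    measurableSet_le (by fun_prop) (by fun_prop)
  have hR : ∀ ℓ : ℕ, ENNReal.ofReal (Real.exp (-(a / 4) * (ℓ : ℝ) ^ 2)) *
      ∫⁻ yb in Metric.ball (-xb) ((ℓ : ℝ) + 1), h yb =
      ∫⁻ yb, ENNReal.ofReal (Real.exp (-(a / 4) * (ℓ : ℝ) ^ 2)) *
        (Metric.ball (-xb) ((ℓ : ℝ) + 1)).indicator h yb := by
    intro ℓ
    rw [lintegral_const_mul _ (hh.indicator Metric.isOpen_ball.measurableSet),
      lintegral_indicator Metric.isOpen_ball.measurableSet]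
  have hm : ∀ ℓ : ℕ, Measurable fun yb => ENNReal.ofReal (Real.exp (-(a / 4) * (ℓ : ℝ) ^ 2)) *
        (Metric.ball (-xb) ((ℓ : ℝ) + 1)).indicator h yb := fun ℓ =>
    (hh.indicator Metric.isOpen_ball.measurableSet).const_mul _
  rw [tsum_congr hR, ← lintegral_tsum (fun ℓ => (hm ℓ).aemeasurable),
    ← lintegral_const_mul _ (Measurable.tsum hm)]
  refine le_trans (setLIntegral_mono' hS ?_) (setLIntegral_le_lintegral _ _)
  intro y hy
  have hy' : ‖xb + y‖ ≤ 2 * ‖xb - y‖ := hy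
  have ht : 0 ≤ ‖xb + y‖ := norm_nonneg _
  have hmem : y ∈ Metric.ball (-xb) ((⌊‖xb + y‖⌋₊ : ℝ) + 1) := by
    rw [mem_ball_iff_norm, sub_neg_eq_add, add_comm y xb]
    exact Nat.lt_floor_add_one _
  have hfl : (⌊‖xb + y‖⌋₊ : ℝ) ≤ ‖xb + y‖ := Nat.floor_le ht
  refine le_trans ?_ (mul_le_mul_right (ENNReal.le_tsum ⌊‖xb + y‖⌋₊) _)
  rw [Set.indicator_of_mem hmem, ← mul_assoc, ← ENNReal.ofReal_mul hC.le]
  refine mul_le_mul_left (ENNReal.ofReal_le_ofReal ?_) _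
  have haux := T1_aux k (a / 4) hb ‖xb + y‖
  generalize ‖xb + y‖ = t at *
  generalize ‖xb - y‖ = s at *
  have hfl2 : (⌊t⌋₊ : ℝ) ^ 2 ≤ t ^ 2 := by gcongr
  calc t ^ k * Real.exp (-a * s * t)
      ≤ ((1 + k.factorial / (a / 4) ^ k) * Real.exp (a / 4 * t ^ 2)) * Real.exp (-a * s * t) := by
        gcongr
    _ = (1 + k.factorial / (a / 4) ^ k) * Real.exp (a / 4 * t ^ 2 + -a * s * t) := by
        rw [mul_assoc, ← Real.exp_add]
    _ ≤ _ := by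
        gcongr
        have h1 : t * t ≤ 2 * s * t := mul_le_mul_of_nonneg_right hy' ht
        nlinarith [mul_le_mul_of_nonneg_left h1 ha.le, mul_le_mul_of_nonneg_left hfl2 ha.le]
end

section
/- Let n ≥ 1 and α = (α_1,…,α_n) ∈ [0,∞)^n, and let 𝔪_α be the measure on (0,∞)^n with density ∏_{i=1}^n x_i^{2α_i+1} with respect to Lebesgue measure. Then 𝔪_α is doubling: there exists C > 0 such that for every x ∈ (0,∞)^n and every r > 0, 𝔪_α(B(x,2r) ∩ (0,∞)^n) ≤ C · 𝔪_α(B(x,r) ∩ (0,∞)^n), where B(x,r) is the Euclidean ball of center x and radius r. -/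
open MeasureTheory

theorem pmd_coord {n : ℕ} (x y : EuclideanSpace ℝ (Fin n)) (r : ℝ) (h : dist x y < r) (i : Fin n) :
    |x i - y i| < r := by
  have := PiLp.norm_apply_le (x - y) i
  rw [dist_eq_norm] at h
  simp only [PiLp.sub_apply, Real.norm_eq_abs] at this
  linarith

theorem pmd_dist {n : ℕ} (hn : 1 ≤ n) (x y : EuclideanSpace ℝ (Fin n)) (s : ℝ) (hs : 0 ≤ s)
    (h : ∀ i, |x i - y i| ≤ s) : dist x y ≤ n * s := by
  rw [EuclideanSpace.dist_eq]
  have hn' : (1:ℝ) ≤ n := by exact_mod_cast hn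
  apply Real.sqrt_le_iff.2
  refine ⟨by positivity, ?_⟩
  calc ∑ i, dist (x i) (y i) ^ 2 ≤ ∑ _i : Fin n, s ^ 2 := by
        apply Finset.sum_le_sum
        intro i _
        rw [Real.dist_eq]
        exact pow_le_pow_left₀ (abs_nonneg _) (h i) 2
    _ = n * s ^ 2 := by simp
    _ ≤ (n * s) ^ 2 := by nlinarith [sq_nonneg s, mul_nonneg (sub_nonneg.2 hn') (sq_nonneg s)]

/-- **Doubling property of the polynomial measure `𝔪_α`** (for `α ∈ [0,∞)ⁿ`):
the measure on `(0,∞)ⁿ` with density `∏ᵢ x_i^{2α_i+1}` w.r.t. Lebesgue measure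
satisfies `𝔪_α(B(x,2r) ∩ (0,∞)ⁿ) ≤ C · 𝔪_α(B(x,r) ∩ (0,∞)ⁿ)` for all
`x ∈ (0,∞)ⁿ` and `r > 0`, with `B(x,r)` the Euclidean ball. -/
theorem polynomial_measure_doubling (n : ℕ) (hn : 1 ≤ n)
    (α : Fin n → ℝ) (hα : ∀ i, 0 ≤ α i) :
    ∃ C > (0:ℝ),
      ∀ x : EuclideanSpace ℝ (Fin n), (∀ i, 0 < x i) → ∀ r : ℝ, 0 < r →
        (volume.withDensity
            (fun z : EuclideanSpace ℝ (Fin n) =>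
              ENNReal.ofReal (∏ i, z i ^ (2 * α i + 1))))
            (Metric.ball x (2 * r) ∩ {z : EuclideanSpace ℝ (Fin n) | ∀ i, 0 < z i}) ≤
          ENNReal.ofReal C *
            (volume.withDensity
              (fun z : EuclideanSpace ℝ (Fin n) =>
                ENNReal.ofReal (∏ i, z i ^ (2 * α i + 1))))
              (Metric.ball x r ∩ {z : EuclideanSpace ℝ (Fin n) | ∀ i, 0 < z i}) := by
  have hn' : (1:ℝ) ≤ n := by exact_mod_cast hn
  have hn0 : (0:ℝ) < n := by linarith
  have ha : ∀ i, 0 ≤ 2 * α i + 1 := fun i => by linarith [hα i]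
  refine ⟨(∏ i, (8 * n : ℝ) ^ (2 * α i + 1)) * (8 * n) ^ n, by positivity, ?_⟩
  intro x hx r hr
  set f : EuclideanSpace ℝ (Fin n) → ENNReal :=
    fun z => ENNReal.ofReal (∏ i, z i ^ (2 * α i + 1)) with hf
  have hpos : MeasurableSet {z : EuclideanSpace ℝ (Fin n) | ∀ i, 0 < z i} := by
    simp only [Set.ofPred_forall]
    exact MeasurableSet.iInter fun i => measurableSet_lt (by fun_prop) (by fun_prop)
  obtain ⟨t, ht⟩ : ∃ t : ℝ, t = r / (2 * n) := ⟨_, rfl⟩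
  have ht0 : 0 < t := by rw [ht]; positivity
  have hrt : r = 2 * n * t := by rw [ht]; field_simp
  let y : EuclideanSpace ℝ (Fin n) := WithLp.toLp 2 (fun i => x i + t)
  have hy : ∀ i, y i = x i + t := fun i => rfl
  rw [withDensity_apply _ (Metric.isOpen_ball.measurableSet.inter hpos),
    withDensity_apply _ (Metric.isOpen_ball.measurableSet.inter hpos)]
  have hzy : ∀ z ∈ Metric.ball y (t / 2), ∀ i, |z i - x i - t| < t / 2 := by
    intro z hz i
    have := pmd_coord z y _ hz i
    rw [hy] at this
    rwa [← sub_sub]  at this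
  have hsub : Metric.ball y (t / 2) ⊆
      Metric.ball x r ∩ {z : EuclideanSpace ℝ (Fin n) | ∀ i, 0 < z i} := by
    intro z hz
    have h1 := hzy z hz
    refine ⟨?_, fun i => ?_⟩
    · have := pmd_dist hn z x (3 * t / 2) (by positivity) (fun i => by
        have := abs_lt.1 (h1 i)
        rw [abs_le]; constructor <;> linarith)
      rw [Metric.mem_ball]
      have : 0 < n * t := by positivity
      rw [hrt]; linarith
    · have := abs_lt.1 (h1 i)
      linarith [hx i]
  have hup : ∫⁻ z in Metric.ball x (2 * r) ∩ {z | ∀ i, 0 < z i}, f z ≤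
      ENNReal.ofReal (∏ i, (x i + 2 * r) ^ (2 * α i + 1)) * volume (Metric.ball x (2 * r)) := by
    calc _ ≤ ∫⁻ z in Metric.ball x (2 * r) ∩ {z | ∀ i, 0 < z i},
          ENNReal.ofReal (∏ i, (x i + 2 * r) ^ (2 * α i + 1)) := by
          apply setLIntegral_mono measurable_const
          rintro z ⟨hz, hz0⟩
          apply ENNReal.ofReal_le_ofReal
          apply Finset.prod_le_prod
          · intro i _
            exact Real.rpow_nonneg (hz0 i).le _
          · intro i _
            apply Real.rpow_le_rpow (hz0 i).le _ (ha i)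
            have := abs_lt.1 (pmd_coord z x _ hz i)
            linarith
      _ ≤ _ := by
          rw [setLIntegral_const]
          gcongr
          exact Set.inter_subset_left
  have hlow : ENNReal.ofReal (∏ i, (x i + t / 2) ^ (2 * α i + 1)) * volume (Metric.ball y (t / 2)) ≤
      ∫⁻ z in Metric.ball x r ∩ {z | ∀ i, 0 < z i}, f z := by
    calc _ = ∫⁻ z in Metric.ball y (t / 2),
          ENNReal.ofReal (∏ i, (x i + t / 2) ^ (2 * α i + 1)) := by
          rw [setLIntegral_const]
      _ ≤ ∫⁻ z in Metric.ball y (t / 2), f z := by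
          apply setLIntegral_mono' Metric.isOpen_ball.measurableSet
          intro z hz
          apply ENNReal.ofReal_le_ofReal
          apply Finset.prod_le_prod
          · intro i _
            have := hx i
            positivity
          · intro i _
            have := hx i
            apply Real.rpow_le_rpow (by positivity) _ (ha i)
            have := abs_lt.1 (hzy z hz i)
            linarith
      _ ≤ _ := lintegral_mono_set hsub
  refine hup.trans (le_trans ?_ (mul_le_mul_right hlow _))
  rw [Measure.addHaar_ball_of_pos _ x (by positivity), Measure.addHaar_ball_of_pos _ y (by positivity)]
  simp only [finrank_euclideanSpace, Fintype.card_fin]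
  have h2 : 2 * r = 8 * n * (t / 2) := by rw [hrt]; ring
  have hP : ∏ i, (x i + 2 * r) ^ (2 * α i + 1) ≤
      (∏ i, (8 * n : ℝ) ^ (2 * α i + 1)) * ∏ i, (x i + t / 2) ^ (2 * α i + 1) := by
    rw [← Finset.prod_mul_distrib]
    apply Finset.prod_le_prod
    · intro i _
      have := hx i
      positivity
    · intro i _
      have := hx i
      rw [← Real.mul_rpow (by positivity) (by positivity)]
      apply Real.rpow_le_rpow (by positivity) _ (ha i)
      rw [h2]
      nlinarith
  have hQ : 0 ≤ ∏ i, (x i + t / 2) ^ (2 * α i + 1) :=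
    Finset.prod_nonneg fun i _ => by
      have := hx i
      positivity
  rw [← mul_assoc, ← mul_assoc, ← mul_assoc, ← ENNReal.ofReal_mul' (by positivity),
    ← ENNReal.ofReal_mul (by positivity), ← ENNReal.ofReal_mul (by positivity)]
  refine mul_le_mul' (ENNReal.ofReal_le_ofReal ?_) le_rfl
  refine (mul_le_mul_of_nonneg_right hP (by positivity)).trans (le_of_eq ?_)
  rw [h2, mul_pow (8 * (n : ℝ)) (t / 2) n]
  generalize (t / 2) ^ n = u
  generalize (8 * (n : ℝ)) ^ n = v
  generalize (∏ i, (8 * n : ℝ) ^ (2 * α i + 1)) = p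
  generalize (∏ i, (x i + t / 2) ^ (2 * α i + 1)) = q
  ring
end
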